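/- Let τ = (1 + √5)/2 and p = 10. Then the lattice S(p,τ) is generated by the union of two mirror stabilizers: the subgroup of GL(3,ℂ) generated by Stab(m₁) ∪ Stab(m₂) equals S(p,τ), where m₁ is the mirror of the complex reflection R₁ and m₂ = span_ℂ{e₁, R₂·e₃} is the mirror of the complex reflection (R₁·R₂R₃R₂⁻¹)³. -/

import Mathlib

open Matrix

noncomputable section

/-- `u = exp(2πi/(3p))`. -/
def uPar (p : ℕ) : ℂ := Complex.exp (2 * Real.pi * Complex.I / (3 * p))

/-- `α = 2 − u³ − conj(u)³`. -/
def alphaPar (p : ℕ) : ℂ :=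
  2 - uPar p ^ 3 - starRingEnd ℂ (uPar p) ^ 3

/-- `β = (conj(u)² − u)·τ`. -/
def betaPar (p : ℕ) (τ : ℂ) : ℂ := (starRingEnd ℂ (uPar p) ^ 2 - uPar p) * τ

/-- The generator `R₁` of `S(p,τ)`. -/
def R1S (p : ℕ) (τ : ℂ) : Matrix (Fin 3) (Fin 3) ℂ :=
  !![uPar p ^ 2, τ, -(uPar p) * starRingEnd ℂ τ;
     0, starRingEnd ℂ (uPar p), 0;
     0, 0, starRingEnd ℂ (uPar p)]

/-- The reflection `R₂ = J·R₁·J⁻¹` of `S(p,τ)`. -/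
def R2S (p : ℕ) (τ : ℂ) : Matrix (Fin 3) (Fin 3) ℂ :=
  !![starRingEnd ℂ (uPar p), 0, 0;
     -(uPar p) * starRingEnd ℂ τ, uPar p ^ 2, τ;
     0, 0, starRingEnd ℂ (uPar p)]

/-- The reflection `R₃ = J·R₂·J⁻¹` of `S(p,τ)`. -/
def R3S (p : ℕ) (τ : ℂ) : Matrix (Fin 3) (Fin 3) ℂ :=
  !![starRingEnd ℂ (uPar p), 0, 0;
     0, starRingEnd ℂ (uPar p), 0;
     τ, -(uPar p) * starRingEnd ℂ τ, uPar p ^ 2]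

/-- The cyclic permutation matrix `J`. -/
def Jmat : Matrix (Fin 3) (Fin 3) ℂ :=
  !![0, 0, 1; 1, 0, 0; 0, 1, 0]

/-- The linear functional `x ↦ a·x₁ + b·x₂ + c·x₃` on `ℂ³`. -/
def lfun (a b c : ℂ) : (Fin 3 → ℂ) →ₗ[ℂ] ℂ :=
  a • (LinearMap.proj 0 : (Fin 3 → ℂ) →ₗ[ℂ] ℂ) +
    b • (LinearMap.proj 1 : (Fin 3 → ℂ) →ₗ[ℂ] ℂ) +
    c • (LinearMap.proj 2 : (Fin 3 → ℂ) →ₗ[ℂ] ℂ)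

/-- The mirror of `R₁`: `{x ∈ ℂ³ : α·x₁ + β·x₂ + conj(β)·x₃ = 0}`,
the `H`-orthogonal complement of `e₁`. -/
def mirror1 (p : ℕ) (τ : ℂ) : Submodule ℂ (Fin 3 → ℂ) :=
  LinearMap.ker (lfun (alphaPar p) (betaPar p τ) (starRingEnd ℂ (betaPar p τ)))

/-- The stabilizer of a subspace `m` of `ℂ³` inside a subgroup `S` of `GL(3,ℂ)`:
the set of elements of `S` mapping `m` onto itself. -/
def mirrorStab (S : Subgroup (GL (Fin 3) ℂ)) (m : Submodule ℂ (Fin 3 → ℂ)) :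
    Set (GL (Fin 3) ℂ) :=
  {g | g ∈ S ∧ m.map (Matrix.mulVecLin (g : Matrix (Fin 3) (Fin 3) ℂ)) = m}

end

section Helpers

/-- `R₁` with `u = a`, `conj u = b`, `τ = t` real. -/
def A1 (a b t : ℂ) : Matrix (Fin 3) (Fin 3) ℂ := !![a ^ 2, t, -a * t; 0, b, 0; 0, 0, b]
/-- `R₂`. -/
def A2 (a b t : ℂ) : Matrix (Fin 3) (Fin 3) ℂ := !![b, 0, 0; -a * t, a ^ 2, t; 0, 0, b]
/-- `R₃`. -/
def A3 (a b t : ℂ) : Matrix (Fin 3) (Fin 3) ℂ := !![b, 0, 0; 0, b, 0; t, -a * t, a ^ 2]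
/-- The inverse of `R₂`. -/
def B2 (a b t : ℂ) : Matrix (Fin 3) (Fin 3) ℂ := !![a, 0, 0; t, b ^ 2, -t * b; 0, 0, a]
/-- The inverse of `R₃`. -/
def B3 (a b t : ℂ) : Matrix (Fin 3) (Fin 3) ℂ := !![a, 0, 0; 0, a, 0; -t * b, t, b ^ 2]
/-- The inverse of `J`. -/
def Ki : Matrix (Fin 3) (Fin 3) ℂ := !![0, 1, 0; 0, 0, 1; 1, 0, 0]

theorem A2_B2 {a b t : ℂ} (h : a * b = 1) : A2 a b t * B2 a b t = 1 := by
  ext i k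
  fin_cases i <;> fin_cases k <;>
    simp [A2, B2, Matrix.mul_apply, Fin.sum_univ_three] <;> grind

theorem A3_B3 {a b t : ℂ} (h : a * b = 1) : A3 a b t * B3 a b t = 1 := by
  ext i k
  fin_cases i <;> fin_cases k <;>
    simp [A3, B3, Matrix.mul_apply, Fin.sum_univ_three] <;> grind

theorem J_Ki : Jmat * Ki = 1 := by
  ext i k
  fin_cases i <;> fin_cases k <;>
    simp [Jmat, Ki, Matrix.mul_apply, Fin.sum_univ_three]

theorem conj_A1 (a b t : ℂ) : Jmat * A1 a b t * Ki = A2 a b t := by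
  ext i k
  fin_cases i <;> fin_cases k <;>
    simp [Jmat, Ki, A1, A2, Matrix.mul_apply, Fin.sum_univ_three]

theorem conj_A2 (a b t : ℂ) : Jmat * A2 a b t * Ki = A3 a b t := by
  ext i k
  fin_cases i <;> fin_cases k <;>
    simp [Jmat, Ki, A3, A2, Matrix.mul_apply, Fin.sum_univ_three]

theorem J_word {a b t : ℂ} (h : a * b = 1) (ht : t ^ 2 = t + 1) :
    A1 a b t * A2 a b t * A3 a b t * A1 a b t * A2 a b t = Jmat := by
  ext i k
  fin_cases i <;> fin_cases k <;>
    simp [Jmat, A1, A2, A3, Matrix.mul_apply, Fin.sum_univ_three] <;> grind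

/-- The row vector `(α, β, conj β)` defining the mirror of `R₁`. -/
def Lrow (a b t : ℂ) : Matrix (Fin 1) (Fin 3) ℂ :=
  !![2 - a ^ 3 - b ^ 3, (b ^ 2 - a) * t, (a ^ 2 - b) * t]

theorem Lrow_A1 {a b t : ℂ} (h : a * b = 1) : Lrow a b t * A1 a b t = (a ^ 2) • Lrow a b t := by
  ext i k
  fin_cases i; fin_cases k <;>
    simp [Lrow, A1, Matrix.mul_apply, Fin.sum_univ_three] <;> grind

theorem Lrow_y {a b t : ℂ} (h : a * b = 1) (ht : t ^ 2 = t + 1) :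
    Lrow a b t * A2 a b t * A3 a b t * A2 a b t =
      b • (Lrow a b t * A2 a b t * A3 a b t) := by
  ext i k
  fin_cases i; fin_cases k <;>
    simp [Lrow, A2, A3, Matrix.mul_apply, Fin.sum_univ_three] <;> grind

theorem Lrow_y' {a b t : ℂ} (h : a * b = 1) (ht : t ^ 2 = t + 1) :
    Lrow a b t * (A2 a b t * A3 a b t * A2 a b t * B3 a b t * B2 a b t) = b • Lrow a b t := by
  simp only [← Matrix.mul_assoc]
  rw [Lrow_y h ht, Matrix.smul_mul, Matrix.smul_mul, Matrix.mul_assoc _ (A3 a b t), A3_B3 h,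
    Matrix.mul_one, Matrix.mul_assoc _ (A2 a b t), A2_B2 h, Matrix.mul_one]

theorem map_eq_of_le (g : GL (Fin 3) ℂ) (m : Submodule ℂ (Fin 3 → ℂ))
    (h : ∀ x ∈ m, (g : Matrix (Fin 3) (Fin 3) ℂ) *ᵥ x ∈ m) :
    m.map (Matrix.mulVecLin (g : Matrix (Fin 3) (Fin 3) ℂ)) = m := by
  have hinj : Function.Injective (Matrix.mulVecLin (g : Matrix (Fin 3) (Fin 3) ℂ)) :=
    Matrix.mulVec_injective_of_isUnit g.isUnit
  apply Submodule.eq_of_le_of_finrank_eq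
  · rintro _ ⟨x, hx, rfl⟩
    exact h x hx
  · exact (Submodule.equivMapOfInjective _ hinj m).finrank_eq.symm

theorem mem_ker_iff (a b t : ℂ) (x : Fin 3 → ℂ) :
    x ∈ LinearMap.ker (lfun (2 - a ^ 3 - b ^ 3) ((b ^ 2 - a) * t) ((a ^ 2 - b) * t)) ↔
      Lrow a b t *ᵥ x = 0 := by
  rw [LinearMap.mem_ker, funext_iff]
  simp [lfun, Lrow, Matrix.mulVec, dotProduct, Fin.sum_univ_three]

theorem ker_stable (a b t c : ℂ) (M : Matrix (Fin 3) (Fin 3) ℂ)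
    (hM : Lrow a b t * M = c • Lrow a b t) (x : Fin 3 → ℂ)
    (hx : x ∈ LinearMap.ker (lfun (2 - a ^ 3 - b ^ 3) ((b ^ 2 - a) * t) ((a ^ 2 - b) * t))) :
    M *ᵥ x ∈ LinearMap.ker (lfun (2 - a ^ 3 - b ^ 3) ((b ^ 2 - a) * t) ((a ^ 2 - b) * t)) := by
  rw [mem_ker_iff] at hx ⊢
  rw [Matrix.mulVec_mulVec, hM, Matrix.smul_mulVec, hx, smul_zero]

theorem x_e1 {a b t : ℂ} (h : a * b = 1) :
    (A2 a b t * A3 a b t * B2 a b t) *ᵥ (Pi.single 0 1) =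
      b • (Pi.single 0 1 : Fin 3 → ℂ) + (a * t - a * t ^ 2) • (A2 a b t *ᵥ (Pi.single 2 1)) := by
  ext i
  fin_cases i <;>
    simp [A2, A3, B2, Matrix.mul_apply, Fin.sum_univ_three] <;> grind

theorem x_h {a b t : ℂ} (h : a * b = 1) :
    (A2 a b t * A3 a b t * B2 a b t) *ᵥ (A2 a b t *ᵥ (Pi.single 2 1)) =
      (a ^ 2) • (A2 a b t *ᵥ (Pi.single 2 1)) := by
  have h2 : B2 a b t * A2 a b t = 1 := mul_eq_one_comm.mp (A2_B2 h)
  rw [Matrix.mulVec_mulVec, Matrix.mul_assoc, h2, Matrix.mul_one]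
  ext i
  fin_cases i <;>
    simp [A2, A3, Matrix.mul_apply, Fin.sum_univ_three] <;> grind

theorem span_stable {a b t : ℂ} (h : a * b = 1) (x : Fin 3 → ℂ)
    (hx : x ∈ Submodule.span ℂ {Pi.single 0 1, A2 a b t *ᵥ (Pi.single 2 1)}) :
    (A2 a b t * A3 a b t * B2 a b t) *ᵥ x ∈
      Submodule.span ℂ {Pi.single 0 1, A2 a b t *ᵥ (Pi.single 2 1)} := by
  obtain ⟨c, d, rfl⟩ := Submodule.mem_span_pair.mp hx
  rw [Matrix.mulVec_add, Matrix.mulVec_smul, Matrix.mulVec_smul, x_e1 h, x_h h]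
  have m1 := Submodule.subset_span (R := ℂ)
    (show (Pi.single 0 1 : Fin 3 → ℂ) ∈ ({Pi.single 0 1, A2 a b t *ᵥ (Pi.single 2 1)} : Set _) by simp)
  have m2 := Submodule.subset_span (R := ℂ)
    (show A2 a b t *ᵥ (Pi.single 2 1) ∈
      ({Pi.single 0 1, A2 a b t *ᵥ (Pi.single 2 1)} : Set (Fin 3 → ℂ)) by simp)
  exact add_mem (Submodule.smul_mem _ _ (add_mem (Submodule.smul_mem _ _ m1)
    (Submodule.smul_mem _ _ m2))) (Submodule.smul_mem _ _ (Submodule.smul_mem _ _ m2))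

theorem uPar_mul_conj (p : ℕ) : uPar p * starRingEnd ℂ (uPar p) = 1 := by
  have : uPar p = Complex.exp (((2 * Real.pi / (3 * p) : ℝ) : ℂ) * Complex.I) := by
    unfold uPar; congr 1; push_cast; ring
  rw [Complex.mul_conj, Complex.normSq_eq_norm_sq, this, Complex.norm_exp_ofReal_mul_I]
  simp

theorem coe_inv_eq (g : GL (Fin 3) ℂ) (M : Matrix (Fin 3) (Fin 3) ℂ)
    (h : (g : Matrix (Fin 3) (Fin 3) ℂ) * M = 1) :
    ((g⁻¹ : GL (Fin 3) ℂ) : Matrix (Fin 3) (Fin 3) ℂ) = M := by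
  rw [Matrix.coe_units_inv]
  exact Matrix.inv_eq_right_inv h

end Helpers

/-- For `τ = (1+√5)/2` and `p = 10`, the lattice `S(p,τ)` is generated by the
union of the stabilizers of the mirror of `R₁` and of the mirror
`span{e₁, R₂·e₃}` of the complex reflection `(R₁·R₂R₃R₂⁻¹)³`. -/
theorem stmt18 (p : ℕ) (hp : p = 10)
    (τ : ℂ) (hτ : τ = (1 + Real.sqrt 5) / 2)
    (r₁ j : GL (Fin 3) ℂ)
    (hr₁ : (↑r₁ : Matrix (Fin 3) (Fin 3) ℂ) = R1S p τ)
    (hj : (↑j : Matrix (Fin 3) (Fin 3) ℂ) = Jmat) :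
    Subgroup.closure
        (mirrorStab (Subgroup.closure {r₁, j}) (mirror1 p τ) ∪
          mirrorStab (Subgroup.closure {r₁, j})
            (Submodule.span ℂ
              {Pi.single 0 1, (R2S p τ).mulVec (Pi.single 2 1)})) =
      Subgroup.closure {r₁, j} := by
  have hab := uPar_mul_conj p
  have htr : starRingEnd ℂ τ = τ := by
    rw [hτ, map_div₀, map_add, Complex.conj_ofReal, map_one, Complex.conj_ofNat]
  have ht2 : τ ^ 2 = τ + 1 := by
    have h5 : ((Real.sqrt 5 : ℝ) : ℂ) ^ 2 = 5 := by
      rw [← Complex.ofReal_pow, Real.sq_sqrt (by norm_num)]; norm_num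
    rw [hτ]; linear_combination h5 / 4
  have hR2 : R2S p τ = A2 (uPar p) (starRingEnd ℂ (uPar p)) τ := by
    simp only [R2S, A2, htr]
  have hR1 : R1S p τ = A1 (uPar p) (starRingEnd ℂ (uPar p)) τ := by
    simp only [R1S, A1, htr]
  have hm : mirror1 p τ = LinearMap.ker (lfun
      (2 - uPar p ^ 3 - starRingEnd ℂ (uPar p) ^ 3) ((starRingEnd ℂ (uPar p) ^ 2 - uPar p) * τ)
      ((uPar p ^ 2 - starRingEnd ℂ (uPar p)) * τ)) := by
    simp [mirror1, alphaPar, betaPar, htr]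
  rw [hR2, hm]
  rw [hR1] at hr₁
  generalize starRingEnd ℂ (uPar p) = b at *
  generalize uPar p = a at *
  set S := Subgroup.closure {r₁, j} with hS
  have r1S : r₁ ∈ S := Subgroup.subset_closure (by simp)
  have jS : j ∈ S := Subgroup.subset_closure (by simp)
  have hji := coe_inv_eq j Ki (by rw [hj, J_Ki])
  obtain ⟨r₂, hr₂d⟩ : ∃ r, r = j * r₁ * j⁻¹ := ⟨_, rfl⟩
  obtain ⟨r₃, hr₃d⟩ : ∃ r, r = j * r₂ * j⁻¹ := ⟨_, rfl⟩
  have r2S : r₂ ∈ S := hr₂d ▸ mul_mem (mul_mem jS r1S) (inv_mem jS)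
  have r3S : r₃ ∈ S := hr₃d ▸ mul_mem (mul_mem jS r2S) (inv_mem jS)
  have hr₂ : (r₂ : Matrix (Fin 3) (Fin 3) ℂ) = A2 a b τ := by
    rw [hr₂d, Units.val_mul, Units.val_mul, hj, hji, hr₁, conj_A1]
  have hr₃ : (r₃ : Matrix (Fin 3) (Fin 3) ℂ) = A3 a b τ := by
    rw [hr₃d, Units.val_mul, Units.val_mul, hj, hji, hr₂, conj_A2]
  have hr₂i := coe_inv_eq r₂ (B2 a b τ) (by rw [hr₂, A2_B2 hab])
  have hr₃i := coe_inv_eq r₃ (B3 a b τ) (by rw [hr₃, A3_B3 hab])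
  have hjw : j = r₁ * r₂ * r₃ * r₁ * r₂ := by
    apply Units.ext
    simp only [Units.val_mul, hr₁, hr₂, hr₃, hj, J_word hab ht2]
  apply le_antisymm
  · rw [Subgroup.closure_le]
    rintro g (hg | hg)
    · exact hg.1
    · exact hg.1
  set K := Subgroup.closure (mirrorStab S _ ∪ mirrorStab S _) with hK
  have r1K : r₁ ∈ K := by
    refine Subgroup.subset_closure (Or.inl ⟨r1S, map_eq_of_le _ _ ?_⟩)
    rw [hr₁]
    exact ker_stable a b τ _ _ (Lrow_A1 hab)
  have yK : r₂ * r₃ * r₂ * r₃⁻¹ * r₂⁻¹ ∈ K := by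
    refine Subgroup.subset_closure (Or.inl ⟨?_, map_eq_of_le _ _ ?_⟩)
    · exact mul_mem (mul_mem (mul_mem (mul_mem r2S r3S) r2S) (inv_mem r3S)) (inv_mem r2S)
    simp only [Units.val_mul, hr₂, hr₃, hr₂i, hr₃i]
    exact ker_stable a b τ _ _ (Lrow_y' hab ht2)
  have xK : r₂ * r₃ * r₂⁻¹ ∈ K := by
    refine Subgroup.subset_closure (Or.inr ⟨?_, map_eq_of_le _ _ ?_⟩)
    · exact mul_mem (mul_mem r2S r3S) (inv_mem r2S)
    simp only [Units.val_mul, hr₂, hr₃, hr₂i]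
    exact span_stable hab
  have r2K : r₂ ∈ K := by
    have := mul_mem (mul_mem (inv_mem xK) yK) xK
    have e : (r₂ * r₃ * r₂⁻¹)⁻¹ * (r₂ * r₃ * r₂ * r₃⁻¹ * r₂⁻¹) * (r₂ * r₃ * r₂⁻¹) = r₂ := by
      group
    rwa [e] at this
  have r3K : r₃ ∈ K := by
    have := mul_mem (mul_mem (inv_mem r2K) xK) r2K
    have e : r₂⁻¹ * (r₂ * r₃ * r₂⁻¹) * r₂ = r₃ := by group
    rwa [e] at this
  rw [hS, Subgroup.closure_le]
  rintro g (rfl | rfl)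
  · exact r1K
  · rw [hjw]
    exact mul_mem (mul_mem (mul_mem (mul_mem r1K r2K) r3K) r1K) r2K
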